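/- For every nonempty finite alphabet Σ, the class of languages {L_obs(A) : A an OCA over Σ} ⊆ 𝒫((Σ×ℕ)*) is closed under complement relative to (Σ×ℕ)*, under binary intersection, and under binary union. -/

import Mathlib

/-! Common framework: one-counter automata (OCAs) over a finite alphabet,
with the classical (`oca`), visibly (`vis`) and observability (`obs`) semantics. -/

/-- Letters from an alphabet `α` together with the two counter operations
`inc` and `dec`. -/
inductive Vis (α : Type*) : Type _ where
  | sym : α → Vis α
  | inc : Vis α
  | dec : Vis α

/-- A one-counter automaton (an `m`-OCA) over alphabet `α` with state set `Q`:
an initial state, a set of final states, a threshold `m`, and a transition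
relation `Δ ⊆ Q × {0,…,m} × (α ∪ {inc,dec}) × Q`. -/
structure OCA (Q : Type*) (α : Type*) where
  init : Q
  final : Set Q
  m : ℕ
  Δ : Set (Q × ℕ × Vis α × Q)
  valid : ∀ t ∈ Δ, t.2.1 ≤ m

variable {Q α : Type*}

/-- One step of an OCA, labeled by an element of `(α × ℕ) ∪ {inc, dec}`. -/
def OCA.step (A : OCA Q α) : Q × ℕ → Vis (α × ℕ) → Q × ℕ → Prop
  | (q, x), Vis.inc, (q', x') => x' = x + 1 ∧ (q, min x A.m, Vis.inc, q') ∈ A.Δ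
  | (q, x), Vis.dec, (q', x') => 1 ≤ x ∧ x' = x - 1 ∧ (q, min x A.m, Vis.dec, q') ∈ A.Δ
  | (q, x), Vis.sym (a, y), (q', x') => y = x ∧ x' = x ∧ (q, min x A.m, Vis.sym a, q') ∈ A.Δ

/-- `A.RunFrom c ts cs` holds if there is a partial run of `A` starting in
configuration `c`, with trace `ts`, visiting exactly the configurations
listed in `cs` (starting with `c`). -/
inductive OCA.RunFrom (A : OCA Q α) : Q × ℕ → List (Vis (α × ℕ)) → List (Q × ℕ) → Prop
  | nil (c : Q × ℕ) : OCA.RunFrom A c [] [c]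
  | cons {c c' : Q × ℕ} {τ : Vis (α × ℕ)} {ts : List (Vis (α × ℕ))} {cs : List (Q × ℕ)} :
      A.step c τ c' → OCA.RunFrom A c' ts cs → OCA.RunFrom A c (τ :: ts) (c :: cs)

/-- `ts` is the trace of some accepting run of `A` (a run starting in the
initial configuration `(ι,0)` whose last configuration has a final state). -/
def OCA.AccTrace (A : OCA Q α) (ts : List (Vis (α × ℕ))) : Prop :=
  ∃ cs c, A.RunFrom (A.init, 0) ts cs ∧ cs.getLast? = some c ∧ c.1 ∈ A.final

/-- Projection of a trace letter used for the visibly semantics: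
`(a,x)` becomes `a`, and `inc`/`dec` are kept. -/
def visOf : Vis (α × ℕ) → Vis α
  | Vis.sym (a, _) => Vis.sym a
  | Vis.inc => Vis.inc
  | Vis.dec => Vis.dec

/-- The visibly projection of a trace. -/
def visMap (ts : List (Vis (α × ℕ))) : List (Vis α) := ts.map visOf

/-- The observability projection of a trace: keep the pairs `(a,x)`,
erase `inc`/`dec`. -/
def obsMap (ts : List (Vis (α × ℕ))) : List (α × ℕ) :=
  ts.filterMap fun τ => match τ with
    | Vis.sym p => some p
    | _ => none

/-- The classical projection of a trace: `(a,x)` becomes `a`,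
`inc`/`dec` are erased. -/
def ocaMap (ts : List (Vis (α × ℕ))) : List α :=
  ts.filterMap fun τ => match τ with
    | Vis.sym (a, _) => some a
    | _ => none

/-- The visibly semantics `L_vis(A)`. -/
def OCA.Lvis (A : OCA Q α) : Set (List (Vis α)) :=
  {w | ∃ ts, A.AccTrace ts ∧ visMap ts = w}

/-- The observability semantics `L_obs(A)`. -/
def OCA.Lobs (A : OCA Q α) : Set (List (α × ℕ)) :=
  {w | ∃ ts, A.AccTrace ts ∧ obsMap ts = w}

/-- The classical semantics `L_oca(A)`. -/
def OCA.Loca (A : OCA Q α) : Set (List α) :=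
  {w | ∃ ts, A.AccTrace ts ∧ ocaMap ts = w}

/-- An OCA is deterministic if for every state `q`, counter test `k ≤ m` and
letter `σ ∈ α ∪ {inc,dec}` there is exactly one target state. -/
def OCA.Deterministic (A : OCA Q α) : Prop :=
  ∀ (q : Q) (k : ℕ) (σ : Vis α), k ≤ A.m → ∃! q' : Q, (q, k, σ, q') ∈ A.Δ

/-- Test for the letter `inc`. -/
def isIncB : Vis α → Bool
  | Vis.inc => true
  | _ => false

/-- Test for the letter `dec`. -/
def isDecB : Vis α → Bool
  | Vis.dec => true
  | _ => false

/-- Well-formed words over `α ∪ {inc,dec}`: no prefix contains more `dec`'s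
than `inc`'s. -/
def WFWords (α : Type*) : Set (List (Vis α)) :=
  {w | ∀ p, p <+: w → p.countP isDecB ≤ p.countP isIncB}

/-- `encFrom x0 w` encodes `w ∈ (α × ℕ)*` starting from previous counter
value `x0`: each `(a,x)` becomes `inc^(x-x0) a` (if `x ≥ x0`) or
`dec^(x0-x) a` (otherwise). -/
def encFrom : ℕ → List (α × ℕ) → List (Vis α)
  | _, [] => []
  | x0, (a, x) :: w =>
      (if x0 ≤ x then List.replicate (x - x0) Vis.inc
       else List.replicate (x0 - x) Vis.dec) ++ Vis.sym a :: encFrom x w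

/-- The encoding `enc : (α × ℕ)* → (α ∪ {inc,dec})*`. -/
def enc (w : List (α × ℕ)) : List (Vis α) := encFrom 0 w

/-- The set `Enc_α` of valid encodings. -/
def EncSet (α : Type*) : Set (List (Vis α)) := Set.range (enc (α := α))

/-- A set `S ⊆ ℕ` is ultimately periodic if there are `t` and `d ≥ 1` such
that for all `x ≥ t`, `x ∈ S ↔ x + d ∈ S`. -/
def UltPeriodic (S : Set ℕ) : Prop :=
  ∃ t d : ℕ, 1 ≤ d ∧ ∀ x : ℕ, t ≤ x → (x ∈ S ↔ x + d ∈ S)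

/-- An extended OCA (eOCA): transitions are guarded by ultimately periodic
sets of counter values, and acceptance is given by an ultimately periodic set
of counter values for each state. -/
structure EOCA (Q : Type*) (α : Type*) where
  init : Q
  f : Q → Set ℕ
  hf : ∀ q, UltPeriodic (f q)
  Δ : Set (Q × Set ℕ × Vis α × Q)
  hΔfin : Δ.Finite
  hΔup : ∀ t ∈ Δ, UltPeriodic t.2.1

/-- One step of an eOCA. -/
def EOCA.step (A : EOCA Q α) : Q × ℕ → Vis (α × ℕ) → Q × ℕ → Prop
  | (q, x), Vis.inc, (q', x') =>
      x' = x + 1 ∧ ∃ S, (q, S, Vis.inc, q') ∈ A.Δ ∧ x ∈ S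
  | (q, x), Vis.dec, (q', x') =>
      1 ≤ x ∧ x' = x - 1 ∧ ∃ S, (q, S, Vis.dec, q') ∈ A.Δ ∧ x ∈ S
  | (q, x), Vis.sym (a, y), (q', x') =>
      y = x ∧ x' = x ∧ ∃ S, (q, S, Vis.sym a, q') ∈ A.Δ ∧ x ∈ S

/-- Partial runs of an eOCA, as for OCAs. -/
inductive EOCA.RunFrom (A : EOCA Q α) : Q × ℕ → List (Vis (α × ℕ)) → List (Q × ℕ) → Prop
  | nil (c : Q × ℕ) : EOCA.RunFrom A c [] [c]
  | cons {c c' : Q × ℕ} {τ : Vis (α × ℕ)} {ts : List (Vis (α × ℕ))} {cs : List (Q × ℕ)} :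
      A.step c τ c' → EOCA.RunFrom A c' ts cs → EOCA.RunFrom A c (τ :: ts) (c :: cs)

/-- Accepting traces of an eOCA: the last configuration `(q,x)` satisfies
`x ∈ f q`. -/
def EOCA.AccTrace (A : EOCA Q α) (ts : List (Vis (α × ℕ))) : Prop :=
  ∃ cs c, A.RunFrom (A.init, 0) ts cs ∧ cs.getLast? = some c ∧ c.2 ∈ A.f c.1

/-- The visibly semantics of an eOCA. -/
def EOCA.Lvis (A : EOCA Q α) : Set (List (Vis α)) :=
  {w | ∃ ts, A.AccTrace ts ∧ visMap ts = w}

/-- The observability semantics of an eOCA. -/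
def EOCA.Lobs (A : EOCA Q α) : Set (List (α × ℕ)) :=
  {w | ∃ ts, A.AccTrace ts ∧ obsMap ts = w}

/-- The classical semantics of an eOCA. -/
def EOCA.Loca (A : EOCA Q α) : Set (List α) :=
  {w | ∃ ts, A.AccTrace ts ∧ ocaMap ts = w}

/-- The class of observability languages of OCAs over the alphabet `α`. -/
def ObsClass (α : Type) : Set (Set (List (α × ℕ))) :=
  {L | ∃ (Q : Type) (_ : Fintype Q) (A : OCA Q α), A.Lobs = L}

/-!
Between two letters an OCA may wander silently, but the word `w` over `α × ℕ` only records the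
counter values at the letters, so it can be read along its encoding `enc w`, in which the counter
moves monotonically from each value to the next. Every silent run from level `x` to level `y`
visits all levels in between, hence a subset construction that advances by one level at a time
gives a deterministic automaton on encodings, whose transitions depend on the counter value.
Above the threshold, the silent reachability relation near level `x + k` is determined by the
relation on level `x` itself; there are finitely many such relations, so by pigeonhole the
transitions depend on the counter value in an eventually periodic way. Deterministic automata of
this kind are closed under Boolean operations, and an OCA can simulate them: it keeps the counter
modulo the period in its state and remembers in which direction the counter has been moving since
the last letter, so as to move only monotonically.
-/

/-! ### Eventually periodic functions -/

section Periodic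

variable {β γ : Type*}

/-- `f x` depends only on `min x t` and on the residue of `x` modulo `d`. For `d = 0` this is
vacuous, as congruence modulo `0` is equality. -/
def PeriodicFrom (t d : ℕ) (f : ℕ → β) : Prop :=
  ∀ x y, min x t = min y t → x ≡ y [MOD d] → f x = f y

/-- Eventually periodic functions on `ℕ`, the analogue of `UltPeriodic` for arbitrary values. -/
def EventuallyPeriodic (f : ℕ → β) : Prop :=
  ∃ t d, 0 < d ∧ PeriodicFrom t d f

theorem PeriodicFrom.of_add {t d : ℕ} {f : ℕ → β} (h : ∀ x, t ≤ x → f (x + d) = f x) :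
    PeriodicFrom t d f := by
  intro x y hmin hmod
  wlog hxy : x ≤ y generalizing x y
  · exact (this y x hmin.symm hmod.symm (by omega)).symm
  rcases lt_or_ge x t with hx | hx
  · rw [show x = y by omega]
  · obtain ⟨n, hn⟩ := (Nat.modEq_iff_dvd' hxy).1 hmod
    have hper : Function.Periodic (fun k => f (t + k)) d := fun k => by
      simpa only [add_assoc] using h (t + k) (Nat.le_add_right t k)
    have hshift := hper.nat_mul n (x - t)
    simp only [Nat.cast_id] at hshift
    rw [show t + (x - t + n * d) = y by rw [mul_comm, ← hn]; omega,
      show t + (x - t) = x by omega] at hshift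
    exact hshift.symm

theorem EventuallyPeriodic.comp {f : ℕ → β} (hf : EventuallyPeriodic f) (g : β → γ) :
    EventuallyPeriodic fun x => g (f x) := by
  obtain ⟨t, d, hd, h⟩ := hf
  exact ⟨t, d, hd, fun x y hmin hmod => congrArg g (h x y hmin hmod)⟩

theorem EventuallyPeriodic.prodMk {f : ℕ → β} {g : ℕ → γ} (hf : EventuallyPeriodic f)
    (hg : EventuallyPeriodic g) : EventuallyPeriodic fun x => (f x, g x) := by
  obtain ⟨t, d, hd, hf⟩ := hf
  obtain ⟨t', d', hd', hg⟩ := hg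
  refine ⟨max t t', d * d', Nat.mul_pos hd hd', fun x y hmin hmod => Prod.ext ?_ ?_⟩
  · exact hf x y (by omega) (hmod.of_mul_right d')
  · exact hg x y (by omega) (hmod.of_mul_left d)

theorem EventuallyPeriodic.of_finite_profile [Finite β] {m : ℕ} (f : ℕ → β) {g : ℕ → γ}
    (h : ∀ x y, m ≤ x → m ≤ y → f x = f y → ∀ k, g (x + k) = g (y + k)) :
    EventuallyPeriodic g := by
  obtain ⟨i, j, hij, hf⟩ : ∃ i j, i < j ∧ f (m + i) = f (m + j) := by
    obtain ⟨i, j, hne, hf⟩ := Finite.exists_ne_map_eq_of_infinite fun i => f (m + i)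
    rcases lt_or_gt_of_ne hne with hij | hij
    · exact ⟨i, j, hij, hf⟩
    · exact ⟨j, i, hij, hf.symm⟩
  refine ⟨m + i, j - i, by omega, PeriodicFrom.of_add fun x hx => ?_⟩
  have hg := h (m + i) (m + j) (by omega) (by omega) hf (x - (m + i))
  rw [show m + i + (x - (m + i)) = x by omega,
    show m + j + (x - (m + i)) = x + (j - i) by omega] at hg
  exact hg.symm

end Periodic

theorem nat_induction_from (x : ℕ) {P : ℕ → Prop} (self : P x)
    (succ : ∀ y, x ≤ y → P y → P (y + 1)) (pred : ∀ y, y < x → P (y + 1) → P y) (y : ℕ) :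
    P y := by
  rcases le_total x y with h | h
  · exact Nat.le_induction self succ y h
  · exact Nat.decreasingInduction pred self h

/-! ### Shift-invariant relations on configurations -/

section CounterRel

open Relation

/-- The relations on configurations that change the counter by at most one and, on counter values
at least `m`, are invariant under translation. -/
structure IsCounterRel (m : ℕ) (R : Q × ℕ → Q × ℕ → Prop) : Prop where
  le_succ : ∀ {c c'}, R c c' → c'.2 ≤ c.2 + 1
  le_succ' : ∀ {c c'}, R c c' → c.2 ≤ c'.2 + 1
  shift : ∀ {x x' k l q q'}, m ≤ x → m ≤ x' → R (q, x + k) (q', x + l) →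
    R (q, x' + k) (q', x' + l)

namespace IsCounterRel

variable {m : ℕ} {R : Q × ℕ → Q × ℕ → Prop}

theorem swap (hR : IsCounterRel m R) : IsCounterRel m (Function.swap R) where
  le_succ := hR.le_succ'
  le_succ' := hR.le_succ
  shift := hR.shift

theorem exists_reach_of_mem_uIcc (hR : IsCounterRel m R) {c c' : Q × ℕ} {z : ℕ}
    (h : ReflTransGen R c c') (hz : z ∈ Set.uIcc c.2 c'.2) :
    ∃ p, ReflTransGen R c (p, z) ∧ ReflTransGen R (p, z) c' := by
  induction h using ReflTransGen.head_induction_on with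
  | refl =>
    obtain rfl : z = c'.2 := by simpa using hz
    exact ⟨c'.1, .refl, .refl⟩
  | @head c b hcb hbc ih =>
    rcases eq_or_ne z c.2 with rfl | hne
    · exact ⟨c.1, .refl, .head hcb hbc⟩
    · have h₁ := hR.le_succ hcb
      have h₂ := hR.le_succ' hcb
      obtain ⟨p, hbp, hpc⟩ := ih (by rw [Set.mem_uIcc] at hz ⊢; omega)
      exact ⟨p, .head hcb hbp, hpc⟩

/- Follow the run down to its first visit to level `x`, translating each step, and use the
hypothesis on that level for the remainder. -/
theorem exists_reach_shift (hR : IsCounterRel m R) {x x' : ℕ} (hx : m ≤ x) (hx' : m ≤ x')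
    {G G' : Set (Q × ℕ)} (hG : ∀ q j, (q, x + j) ∈ G → (q, x' + j) ∈ G')
    (hbase : ∀ q, (∃ c ∈ G, ReflTransGen R (q, x) c) → ∃ c ∈ G', ReflTransGen R (q, x') c)
    {q : Q} {k : ℕ} (h : ∃ c ∈ G, ReflTransGen R (q, x + k) c) :
    ∃ c ∈ G', ReflTransGen R (q, x' + k) c := by
  obtain ⟨c, hc, hreach⟩ := h
  generalize hb : (q, x + k) = b at hreach
  induction hreach using ReflTransGen.head_induction_on generalizing q k with
  | refl => exact ⟨_, hG q k (hb ▸ hc), .refl⟩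
  | @head _ b' hstep hrest ih =>
    subst hb
    rcases Nat.eq_zero_or_pos k with rfl | hk
    · exact hbase q ⟨c, hc, .head hstep hrest⟩
    · obtain ⟨j, hj⟩ : ∃ j, b' = (b'.1, x + j) :=
        ⟨b'.2 - x, Prod.ext rfl (by have := hR.le_succ' hstep; dsimp only at this ⊢; omega)⟩
      obtain ⟨e, he, hreach⟩ := ih hj.symm
      exact ⟨e, he, .head (hR.shift hx hx' (hj ▸ hstep)) hreach⟩

theorem reach_shift (hR : IsCounterRel m R) {x x' : ℕ} (hx : m ≤ x) (hx' : m ≤ x')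
    (hloop : ∀ q q', ReflTransGen R (q, x) (q', x) → ReflTransGen R (q, x') (q', x'))
    {q q' : Q} {k l : ℕ} (h : ReflTransGen R (q, x + k) (q', x + l)) :
    ReflTransGen R (q, x' + k) (q', x' + l) := by
  have hfrom_level : ∀ p, ReflTransGen R (p, x) (q', x + l) →
      ReflTransGen R (p, x') (q', x' + l) := by
    intro p hp
    have := hR.swap.exists_reach_shift hx hx' (G := {(p, x)}) (G' := {(p, x')}) (q := q') (k := l)
      (by simp) (by simpa [reflTransGen_swap] using fun r => hloop p r)
      (by simpa [reflTransGen_swap] using hp)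
    simpa [reflTransGen_swap] using this
  simpa using hR.exists_reach_shift hx hx' (G := {(q', x + l)}) (G' := {(q', x' + l)})
    (by simp) (by simpa using hfrom_level) (by simpa using h)

end IsCounterRel

end CounterRel

/-! ### Deterministic automata reading encodings -/

/-- The effect of a letter on the counter. -/
def Vis.act : Vis α → ℕ → ℕ
  | Vis.sym _, x => x
  | Vis.inc, x => x + 1
  | Vis.dec, x => x - 1

/-- The shortest word of counter operations leading from counter value `x` to `y`; these are the
blocks of counter operations of `encFrom`. -/
def moves (x y : ℕ) : List (Vis α) :=
  if x ≤ y then List.replicate (y - x) Vis.inc else List.replicate (x - y) Vis.dec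

theorem moves_self (x : ℕ) : (moves x x : List (Vis α)) = [] := by
  simp [moves]

theorem moves_succ {x y : ℕ} (h : x ≤ y) :
    (moves x (y + 1) : List (Vis α)) = moves x y ++ [Vis.inc] := by
  rw [moves, moves, if_pos h, if_pos (by omega), Nat.sub_add_comm h, List.replicate_succ']

theorem moves_of_lt {x y : ℕ} (h : y < x) :
    (moves x y : List (Vis α)) = moves x (y + 1) ++ [Vis.dec] := by
  obtain ⟨n, rfl⟩ := Nat.exists_eq_add_of_lt h
  rw [moves, if_neg (by omega), show y + n + 1 - y = n + 1 by omega, List.replicate_succ', moves]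
  rcases Nat.eq_zero_or_pos n with rfl | hn
  · simp
  · rw [if_neg (by omega), show y + n + 1 - (y + 1) = n by omega]

/-- A deterministic automaton reading words over `α ∪ {inc, dec}` whose transitions and acceptance
condition may depend on the current counter value in an arbitrary way. It is deterministic and
complete: a `dec` at counter value `0` leaves the counter at `0`. -/
structure CounterDFA (S α : Type*) where
  start : S
  step : ℕ → Vis α → S → S
  accept : ℕ → Set S

namespace CounterDFA

variable {S S' : Type*} (D : CounterDFA S α) (D' : CounterDFA S' α)

/-- The behaviour of `D` depends on the counter value in an eventually periodic way. -/
def IsPeriodic : Prop :=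
  EventuallyPeriodic fun x => (D.step x, D.accept x)

/-- The configuration reached from a configuration by reading a word. -/
def eval : S × ℕ → List (Vis α) → S × ℕ :=
  List.foldl fun c σ => (D.step c.2 σ c.1, σ.act c.2)

/-- `D` accepts the encoding of `w` relative to the counter value of the configuration `c`. -/
def AcceptsFrom (c : S × ℕ) (w : List (α × ℕ)) : Prop :=
  (D.eval c (encFrom c.2 w)).1 ∈ D.accept (D.eval c (encFrom c.2 w)).2

/-- The words over `α × ℕ` whose encoding is accepted by `D`. -/
def language : Set (List (α × ℕ)) :=
  {w | D.AcceptsFrom (D.start, 0) w}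

/-- The state reached from `s` while the counter moves monotonically from `x` to `y`. -/
def goto (s : S) (x y : ℕ) : S :=
  (D.eval (s, x) (moves x y)).1

theorem eval_append (c : S × ℕ) (u v : List (Vis α)) :
    D.eval c (u ++ v) = D.eval (D.eval c u) v :=
  List.foldl_append

theorem eval_snd (c : S × ℕ) (u : List (Vis α)) :
    (D.eval c u).2 = u.foldl (fun x σ => σ.act x) c.2 := by
  induction u generalizing c with
  | nil => rfl
  | cons _ _ ih => exact ih _

theorem eval_moves (s : S) (x y : ℕ) : D.eval (s, x) (moves x y) = (D.goto s x y, y) := by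
  refine Prod.ext rfl ?_
  induction y using nat_induction_from x with
  | self => rw [moves_self]; rfl
  | succ y h ih => rw [moves_succ h, eval_append]; exact congrArg (· + 1) ih
  | pred y h ih => rw [moves_of_lt h, eval_append]; exact congrArg (· - 1) ih

theorem goto_self (s : S) (x : ℕ) : D.goto s x x = s := by
  rw [goto, moves_self]; rfl

theorem goto_succ (s : S) {x y : ℕ} (h : x ≤ y) :
    D.goto s x (y + 1) = D.step y Vis.inc (D.goto s x y) := by
  rw [goto, moves_succ h, eval_append, eval_moves]; rfl

theorem goto_of_lt (s : S) {x y : ℕ} (h : y < x) :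
    D.goto s x y = D.step (y + 1) Vis.dec (D.goto s x (y + 1)) := by
  rw [goto, moves_of_lt h, eval_append, eval_moves]; rfl

theorem acceptsFrom_nil (s : S) (x : ℕ) : D.AcceptsFrom (s, x) [] ↔ s ∈ D.accept x :=
  Iff.rfl

theorem acceptsFrom_cons (s : S) (x : ℕ) (a : α) (y : ℕ) (w : List (α × ℕ)) :
    D.AcceptsFrom (s, x) ((a, y) :: w) ↔
      D.AcceptsFrom (D.step y (Vis.sym a) (D.goto s x y), y) w := by
  have henc : encFrom x ((a, y) :: w) = moves x y ++ Vis.sym a :: encFrom y w := rfl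
  have heval : D.eval (s, x) (encFrom x ((a, y) :: w)) =
      D.eval (D.step y (Vis.sym a) (D.goto s x y), y) (encFrom y w) := by
    rw [henc, eval_append, eval_moves]; rfl
  simp only [AcceptsFrom, heval]

/-- The automaton for the complement. -/
def compl : CounterDFA S α :=
  { D with accept := fun x => (D.accept x)ᶜ }

theorem language_compl : D.compl.language = D.languageᶜ :=
  rfl

theorem IsPeriodic.compl {D : CounterDFA S α} (h : D.IsPeriodic) : D.compl.IsPeriodic :=
  EventuallyPeriodic.comp h fun p => (p.1, p.2ᶜ)

/-- The product automaton, for the intersection. -/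
def prod : CounterDFA (S × S') α where
  start := (D.start, D'.start)
  step x σ s := (D.step x σ s.1, D'.step x σ s.2)
  accept x := D.accept x ×ˢ D'.accept x

theorem eval_prod_fst (s : S × S') (x : ℕ) (u : List (Vis α)) :
    ((D.prod D').eval (s, x) u).1 = ((D.eval (s.1, x) u).1, (D'.eval (s.2, x) u).1) := by
  induction u generalizing s x with
  | nil => rfl
  | cons _ _ ih => exact ih _ _

theorem language_prod : (D.prod D').language = D.language ∩ D'.language := by
  ext w
  simp only [language, AcceptsFrom, Set.mem_ofPred_eq, Set.mem_inter_iff, eval_snd, eval_prod_fst]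
  rfl

theorem IsPeriodic.prod {D : CounterDFA S α} {D' : CounterDFA S' α} (h : D.IsPeriodic)
    (h' : D'.IsPeriodic) : (D.prod D').IsPeriodic :=
  (EventuallyPeriodic.prodMk h h').comp fun p =>
    (fun σ (s : S × S') => (p.1.1 σ s.1, p.2.1 σ s.2), p.1.2 ×ˢ p.2.2)

end CounterDFA

/-! ### Observability semantics via silent reachability -/

namespace OCA

open Relation

variable (A : OCA Q α)

/-- A step changing the counter, invisible in the observability semantics. -/
def Silent (c c' : Q × ℕ) : Prop :=
  A.step c Vis.inc c' ∨ A.step c Vis.dec c'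

/-- Reachability by silent steps. -/
def Reach : Q × ℕ → Q × ℕ → Prop :=
  ReflTransGen A.Silent

/-- `A.Accepts c w` holds if some run from the configuration `c` to a final state has observable
projection `w`; in contrast to `OCA.AccTrace`, the trace itself is not recorded. -/
inductive Accepts : Q × ℕ → List (α × ℕ) → Prop
  | final {c : Q × ℕ} : c.1 ∈ A.final → Accepts c []
  | silent {c c' : Q × ℕ} {w : List (α × ℕ)} : A.Silent c c' → Accepts c' w → Accepts c w
  | letter {q q' : Q} {x : ℕ} {a : α} {w : List (α × ℕ)} :
      (q, min x A.m, Vis.sym a, q') ∈ A.Δ → Accepts (q', x) w → Accepts (q, x) ((a, x) :: w)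

variable {A}

theorem RunFrom.ne_nil {c : Q × ℕ} {ts : List (Vis (α × ℕ))} {cs : List (Q × ℕ)}
    (h : A.RunFrom c ts cs) : cs ≠ [] := by
  cases h <;> exact List.cons_ne_nil _ _

theorem RunFrom.accepts {c c' : Q × ℕ} {ts : List (Vis (α × ℕ))} {cs : List (Q × ℕ)}
    (h : A.RunFrom c ts cs) (hlast : cs.getLast? = some c') (hfin : c'.1 ∈ A.final) :
    A.Accepts c (obsMap ts) := by
  induction h with
  | nil c =>
    obtain rfl : c = c' := by simpa using hlast
    exact .final hfin
  | @cons c b τ ts cs hstep hrun ih =>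
    rw [List.getLast?_cons_of_ne_nil hrun.ne_nil] at hlast
    have hb := ih hlast
    match τ with
    | Vis.inc => exact .silent (Or.inl hstep) hb
    | Vis.dec => exact .silent (Or.inr hstep) hb
    | Vis.sym (a, y) =>
      obtain ⟨q, x⟩ := c
      obtain ⟨q', x'⟩ := b
      obtain ⟨rfl, rfl, hΔ⟩ := hstep
      exact .letter hΔ hb

theorem Accepts.exists_run {c : Q × ℕ} {w : List (α × ℕ)} (h : A.Accepts c w) :
    ∃ ts cs c', A.RunFrom c ts cs ∧ cs.getLast? = some c' ∧ c'.1 ∈ A.final ∧ obsMap ts = w := by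
  have extend : ∀ {c b : Q × ℕ} {τ ts cs} {c' : Q × ℕ}, A.step c τ b → A.RunFrom b ts cs →
      cs.getLast? = some c' → A.RunFrom c (τ :: ts) (c :: cs) ∧ (c :: cs).getLast? = some c' :=
    fun hstep hrun hlast =>
      ⟨.cons hstep hrun, by rwa [List.getLast?_cons_of_ne_nil hrun.ne_nil]⟩
  induction h with
  | @final c hfin => exact ⟨[], [c], c, .nil c, rfl, hfin, rfl⟩
  | silent hstep _ ih =>
    obtain ⟨ts, cs, c', hrun, hlast, hfin, hobs⟩ := ih
    rcases hstep with hstep | hstep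
    all_goals
      obtain ⟨hrun', hlast'⟩ := extend hstep hrun hlast
      exact ⟨_, _, c', hrun', hlast', hfin, hobs⟩
  | @letter q q' x a w hΔ _ ih =>
    obtain ⟨ts, cs, c', hrun, hlast, hfin, rfl⟩ := ih
    obtain ⟨hrun', hlast'⟩ :=
      extend (c := (q, x)) (τ := Vis.sym (a, x)) ⟨rfl, rfl, hΔ⟩ hrun hlast
    exact ⟨_, _, c', hrun', hlast', hfin, rfl⟩

theorem mem_Lobs_iff {w : List (α × ℕ)} : w ∈ A.Lobs ↔ A.Accepts (A.init, 0) w := by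
  constructor
  · rintro ⟨ts, ⟨cs, c, hrun, hlast, hfin⟩, rfl⟩
    exact hrun.accepts hlast hfin
  · intro h
    obtain ⟨ts, cs, c, hrun, hlast, hfin, hobs⟩ := h.exists_run
    exact ⟨ts, ⟨cs, c, hrun, hlast, hfin⟩, hobs⟩

theorem Accepts.of_reach {c c' : Q × ℕ} {w : List (α × ℕ)} (h : A.Reach c c')
    (hw : A.Accepts c' w) : A.Accepts c w := by
  induction h using ReflTransGen.head_induction_on with
  | refl => exact hw
  | head hstep _ ih => exact .silent hstep ih

theorem accepts_nil_iff {c : Q × ℕ} :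
    A.Accepts c [] ↔ ∃ c' ∈ {c' : Q × ℕ | c'.1 ∈ A.final}, A.Reach c c' := by
  refine ⟨fun h => ?_, fun ⟨c', hfin, hreach⟩ => .of_reach hreach (.final hfin)⟩
  generalize hv : ([] : List (α × ℕ)) = v at h
  induction h with
  | @final c hfin => exact ⟨c, hfin, .refl⟩
  | silent hstep _ ih =>
    obtain ⟨c', hfin, hreach⟩ := ih hv
    exact ⟨c', hfin, .head hstep hreach⟩
  | letter => cases hv

theorem accepts_cons_iff {c : Q × ℕ} {a : α} {y : ℕ} {w : List (α × ℕ)} :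
    A.Accepts c ((a, y) :: w) ↔ ∃ p q, A.Reach c (p, y) ∧ (p, min y A.m, Vis.sym a, q) ∈ A.Δ ∧
      A.Accepts (q, y) w := by
  refine ⟨fun h => ?_, fun ⟨p, q, hreach, hΔ, hw⟩ => .of_reach hreach (.letter hΔ hw)⟩
  generalize hv : (a, y) :: w = v at h
  induction h with
  | final => cases hv
  | silent hstep _ ih =>
    obtain ⟨p, q, hreach, h⟩ := ih hv
    exact ⟨p, q, .head hstep hreach, h⟩
  | @letter p q _ _ _ hΔ hw =>
    cases hv
    exact ⟨p, q, .refl, hΔ, hw⟩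

variable (A)

theorem isCounterRel_silent : IsCounterRel A.m A.Silent where
  le_succ := by
    rintro ⟨q, x⟩ ⟨q', y⟩ (⟨h, -⟩ | ⟨-, h, -⟩) <;> dsimp only <;> omega
  le_succ' := by
    rintro ⟨q, x⟩ ⟨q', y⟩ (⟨h, -⟩ | ⟨-, h, -⟩) <;> dsimp only <;> omega
  shift := by
    rintro x x' k l q q' hx hx' (⟨h, hΔ⟩ | ⟨hpos, h, hΔ⟩) <;>
      rw [min_eq_right (by omega)] at hΔ
    · exact Or.inl ⟨by omega, by rwa [min_eq_right (by omega)]⟩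
    · exact Or.inr ⟨by omega, by omega, by rwa [min_eq_right (by omega)]⟩

/-! ### Determinization -/

/-- A step of the determinization: `inc` and `dec` stand for arbitrary silent runs between
neighbouring levels, and letters may be preceded by a silent loop. -/
def macroStep (x : ℕ) : Vis α → Q → Q → Prop
  | Vis.inc, q, q' => A.Reach (q, x) (q', x + 1)
  | Vis.dec, q, q' => A.Reach (q, x) (q', x - 1)
  | Vis.sym a, q, q' => ∃ p, A.Reach (q, x) (p, x) ∧ (p, min x A.m, Vis.sym a, q') ∈ A.Δ

/-- The subset construction on encodings. -/
def determinize : CounterDFA (Set Q) α where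
  start := {A.init}
  step x σ s := {q' | ∃ q ∈ s, A.macroStep x σ q q'}
  accept x := {s | ∃ q ∈ s, A.Accepts (q, x) []}

/- The sets computed by the determinization need not be closed under silent loops, hence the loop
at `y` on the left-hand side. -/
theorem exists_mem_goto_determinize_reach_iff (s : Set Q) (x y : ℕ) (p : Q) :
    (∃ q ∈ A.determinize.goto s x y, A.Reach (q, y) (p, y)) ↔
      ∃ q ∈ s, A.Reach (q, x) (p, y) := by
  have advance : ∀ {y z : ℕ} {s' : Set Q} (p : Q), y ∈ Set.uIcc x z →
      (∀ r, (∃ q ∈ s', A.Reach (q, y) (r, y)) ↔ ∃ q ∈ s, A.Reach (q, x) (r, y)) →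
      ((∃ r, (∃ q ∈ s', A.Reach (q, y) (r, z)) ∧ A.Reach (r, z) (p, z)) ↔
        ∃ q ∈ s, A.Reach (q, x) (p, z)) := by
    intro y z s' p hy ih
    constructor
    · rintro ⟨r, ⟨q, hq, hqr⟩, hrp⟩
      obtain ⟨q', hq', hq'q⟩ := (ih q).1 ⟨q, hq, .refl⟩
      exact ⟨q', hq', hq'q.trans (hqr.trans hrp)⟩
    · rintro ⟨q, hq, hqp⟩
      obtain ⟨r, hqr, hrp⟩ := A.isCounterRel_silent.exists_reach_of_mem_uIcc hqp hy
      obtain ⟨q', hq', hqr'⟩ := (ih r).2 ⟨q, hq, hqr⟩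
      exact ⟨p, ⟨q', hq', hqr'.trans hrp⟩, .refl⟩
  induction y using nat_induction_from x generalizing p with
  | self => rw [CounterDFA.goto_self]
  | succ y h ih =>
    rw [CounterDFA.goto_succ _ _ h]
    exact advance p (Set.mem_uIcc.2 (by omega)) ih
  | pred y h ih =>
    rw [CounterDFA.goto_of_lt _ _ h]
    exact advance p (Set.mem_uIcc.2 (by omega)) ih

theorem acceptsFrom_determinize_iff (s : Set Q) (x : ℕ) (w : List (α × ℕ)) :
    A.determinize.AcceptsFrom (s, x) w ↔ ∃ q ∈ s, A.Accepts (q, x) w := by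
  induction w generalizing s x with
  | nil => rfl
  | cons b w ih =>
    obtain ⟨a, y⟩ := b
    rw [CounterDFA.acceptsFrom_cons, ih]
    have hgoto := A.exists_mem_goto_determinize_reach_iff s x y
    constructor
    · rintro ⟨q', ⟨r, hr, p, hrp, hΔ⟩, hw⟩
      obtain ⟨q, hq, hqp⟩ := (hgoto p).1 ⟨r, hr, hrp⟩
      exact ⟨q, hq, accepts_cons_iff.2 ⟨p, q', hqp, hΔ, hw⟩⟩
    · rintro ⟨q, hq, hw⟩
      obtain ⟨p, q', hqp, hΔ, hw⟩ := accepts_cons_iff.1 hw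
      obtain ⟨r, hr, hrp⟩ := (hgoto p).2 ⟨q, hq, hqp⟩
      exact ⟨q', ⟨r, hr, p, hrp, hΔ⟩, hw⟩

theorem language_determinize : A.determinize.language = A.Lobs := by
  ext w
  refine (A.acceptsFrom_determinize_iff _ _ _).trans ?_
  rw [mem_Lobs_iff]
  exact exists_eq_left

/-- The data on level `x` determining the silent behaviour above that level: the silent loops and
the states from which a final state is silently reachable. -/
def profile (x : ℕ) : Set (Q × Q) × Set Q :=
  ({p | A.Reach (p.1, x) (p.2, x)}, {q | A.Accepts (q, x) []})

variable {A} {x y : ℕ}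

theorem reach_add_iff_of_profile_eq (hx : A.m ≤ x) (hy : A.m ≤ y)
    (h : A.profile x = A.profile y) (q q' : Q) (k l : ℕ) :
    A.Reach (q, x + k) (q', x + l) ↔ A.Reach (q, y + k) (q', y + l) := by
  have hloop : ∀ p p', A.Reach (p, x) (p', x) ↔ A.Reach (p, y) (p', y) := fun p p' =>
    Set.ext_iff.1 (congrArg Prod.fst h) (p, p')
  exact ⟨A.isCounterRel_silent.reach_shift hx hy fun p p' => (hloop p p').1,
    A.isCounterRel_silent.reach_shift hy hx fun p p' => (hloop p p').2⟩

theorem accepts_nil_add_iff_of_profile_eq (hx : A.m ≤ x) (hy : A.m ≤ y)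
    (h : A.profile x = A.profile y) (q : Q) (k : ℕ) :
    A.Accepts (q, x + k) [] ↔ A.Accepts (q, y + k) [] := by
  have hacc : ∀ p, A.Accepts (p, x) [] ↔ A.Accepts (p, y) [] :=
    Set.ext_iff.1 (congrArg Prod.snd h)
  simp only [accepts_nil_iff] at hacc ⊢
  exact ⟨A.isCounterRel_silent.exists_reach_shift hx hy (fun _ _ => id) fun p => (hacc p).1,
    A.isCounterRel_silent.exists_reach_shift hy hx (fun _ _ => id) fun p => (hacc p).2⟩

theorem macroStep_add_eq_of_profile_eq (hx : A.m ≤ x) (hy : A.m ≤ y)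
    (h : A.profile x = A.profile y) (k : ℕ) :
    A.macroStep (x + (k + 1)) = A.macroStep (y + (k + 1)) := by
  have hreach := reach_add_iff_of_profile_eq hx hy h
  funext σ q q'
  apply propext
  cases σ with
  | inc => exact hreach q q' (k + 1) (k + 2)
  | dec => exact hreach q q' (k + 1) k
  | sym a =>
    simp only [macroStep, hreach, min_eq_right (show A.m ≤ x + (k + 1) by omega),
      min_eq_right (show A.m ≤ y + (k + 1) by omega)]

/- The profile is taken one level below, since a `dec` on level `x` already involves the
level `x - 1`. -/
theorem isPeriodic_determinize [Finite Q] (A : OCA Q α) : A.determinize.IsPeriodic := by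
  refine .of_finite_profile (m := A.m + 1) (fun x => A.profile (x - 1)) fun x y hx hy h k => ?_
  obtain ⟨x, rfl⟩ := Nat.exists_eq_add_one_of_ne_zero (show x ≠ 0 by omega)
  obtain ⟨y, rfl⟩ := Nat.exists_eq_add_one_of_ne_zero (show y ≠ 0 by omega)
  replace hx : A.m ≤ x := Nat.le_of_succ_le_succ hx
  replace hy : A.m ≤ y := Nat.le_of_succ_le_succ hy
  simp only [determinize, add_assoc, add_comm 1 k, macroStep_add_eq_of_profile_eq hx hy h,
    accepts_nil_add_iff_of_profile_eq hx hy h]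

end OCA

/-! ### Simulation of deterministic automata by OCAs -/

namespace CounterDFA

variable {S : Type*} (D : CounterDFA S α) (t d : ℕ)

/-- States of the OCA simulating a `CounterDFA`: the simulated state, the counter value modulo
`d`, the sign of the change of the counter since the last letter, and whether the simulated
automaton was accepting just after that letter. -/
abbrev SimState (S : Type*) (d : ℕ) : Type _ :=
  S × ZMod d × SignType × Prop

/-- The counter operations that keep the movement since the last letter monotone. -/
def Allowed : Vis α → SignType → Prop
  | Vis.inc, e => e ≠ -1
  | Vis.dec, e => e ≠ 1
  | Vis.sym _, _ => True

/-- The successor of a state of the simulating OCA at counter value `x`. -/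
def simStep (x : ℕ) : Vis α → SimState S d → SimState S d
  | Vis.inc, (s, r, _, b) => (D.step x Vis.inc s, r + 1, 1, b)
  | Vis.dec, (s, r, _, b) => (D.step x Vis.dec s, r - 1, -1, b)
  | Vis.sym a, (s, r, _, _) =>
    (D.step x (Vis.sym a) s, r, 0, D.step x (Vis.sym a) s ∈ D.accept x)

/-- The OCA simulating `D`, provided that `D` depends on the counter value `x` only through
`min x t` and `x` modulo `d`. It accepts only just after a letter (or at the very beginning), since
its final states cannot depend on the counter value. -/
def toOCA : OCA (SimState S d) α where
  init := (D.start, 0, 0, D.start ∈ D.accept 0)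
  final := {e | e.2.2.1 = 0 ∧ e.2.2.2}
  m := t
  Δ := {τ | ∃ x : ℕ, τ.2.1 = min x t ∧ τ.1.2.1 = x ∧ Allowed τ.2.2.1 τ.1.2.2.1 ∧
    τ.2.2.2 = D.simStep d x τ.2.2.1 τ.1}
  valid := by
    rintro τ ⟨x, h, -⟩
    exact h ▸ min_le_right x t

/-- The configuration of the simulating OCA after moving the counter monotonically to `y`, when the
last letter was read at counter value `x` and led to the state `s`, with acceptance bit `b`. -/
noncomputable def simConf (x : ℕ) (s : S) (b : Prop) (y : ℕ) : SimState S d × ℕ :=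
  ((D.goto s x y, (y : ZMod d), SignType.sign ((y : ℤ) - x), b), y)

theorem simConf_self (x : ℕ) (s : S) (b : Prop) :
    D.simConf d x s b x = ((s, (x : ZMod d), 0, b), x) := by
  simp [simConf, goto_self]

theorem simConf_succ {x y : ℕ} (s : S) (b : Prop) (h : x ≤ y) :
    D.simConf d x s b (y + 1) =
      (D.simStep d y Vis.inc (D.simConf d x s b y).1, y + 1) := by
  rw [simConf, goto_succ D s h, sign_pos (by omega), Nat.cast_succ]
  rfl

theorem simConf_of_lt {x y : ℕ} (s : S) (b : Prop) (h : y < x) :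
    D.simConf d x s b y =
      (D.simStep d (y + 1) Vis.dec (D.simConf d x s b (y + 1)).1, y) := by
  rw [simConf, goto_of_lt D s h, sign_neg (by omega), simConf, simStep, Nat.cast_succ,
    add_sub_cancel_right]

variable {D t d}

theorem mem_toOCA_Δ_iff (hD : PeriodicFrom t d fun x => (D.step x, D.accept x)) {s : S} {x : ℕ}
    {e : SignType} {b : Prop} {σ : Vis α} {p : SimState S d} :
    ((s, (x : ZMod d), e, b), min x t, σ, p) ∈ (D.toOCA t d).Δ ↔
      Allowed σ e ∧ p = D.simStep d x σ (s, (x : ZMod d), e, b) := by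
  refine ⟨?_, fun h => ⟨x, rfl, rfl, h⟩⟩
  rintro ⟨y, hmin, hres, hdir, hp⟩
  obtain ⟨hstep, haccept⟩ :=
    Prod.ext_iff.1 (hD x y hmin ((ZMod.natCast_eq_natCast_iff x y d).1 hres))
  dsimp only at hstep haccept hp
  refine ⟨hdir, hp.trans ?_⟩
  cases σ <;> simp only [simStep, hstep, haccept]

theorem silent_simConf_iff (hD : PeriodicFrom t d fun x => (D.step x, D.accept x)) {x y : ℕ}
    {s : S} {b : Prop} {c : SimState S d × ℕ} :
    (D.toOCA t d).Silent (D.simConf d x s b y) c ↔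
      (x ≤ y ∧ c = D.simConf d x s b (y + 1)) ∨
        ∃ z, y = z + 1 ∧ z < x ∧ c = D.simConf d x s b z := by
  obtain ⟨p, z⟩ := c
  have hsilent : (D.toOCA t d).Silent (D.simConf d x s b y) (p, z) ↔
      (z = y + 1 ∧ x ≤ y ∧ p = D.simStep d y Vis.inc (D.simConf d x s b y).1) ∨
        (1 ≤ y ∧ z = y - 1 ∧ y ≤ x ∧ p = D.simStep d y Vis.dec (D.simConf d x s b y).1) := by
    refine or_congr (and_congr_right fun _ => (mem_toOCA_Δ_iff hD).trans ?_)
      (and_congr_right fun _ => and_congr_right fun _ => (mem_toOCA_Δ_iff hD).trans ?_)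
    · simp [Allowed, simConf, sign_eq_neg_one_iff]
    · simp [Allowed, simConf, sign_eq_one_iff]
  rw [hsilent]
  refine or_congr ⟨?_, ?_⟩ ⟨?_, ?_⟩
  · rintro ⟨rfl, h, rfl⟩
    exact ⟨h, (D.simConf_succ d s b h).symm⟩
  · rintro ⟨h, hc⟩
    obtain ⟨rfl, rfl⟩ := Prod.mk.inj (hc.trans (D.simConf_succ d s b h))
    exact ⟨rfl, h, rfl⟩
  · rintro ⟨hy, rfl, h, rfl⟩
    obtain ⟨y, rfl⟩ := Nat.exists_eq_add_of_le' hy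
    exact ⟨y, rfl, h, (D.simConf_of_lt d s b h).symm⟩
  · rintro ⟨y, rfl, h, hc⟩
    obtain ⟨rfl, rfl⟩ := Prod.mk.inj (hc.trans (D.simConf_of_lt d s b h))
    exact ⟨Nat.le_add_left _ _, rfl, h, rfl⟩

theorem reach_simConf_iff (hD : PeriodicFrom t d fun x => (D.step x, D.accept x)) {x : ℕ}
    {s : S} {b : Prop} {c : SimState S d × ℕ} :
    (D.toOCA t d).Reach (D.simConf d x s b x) c ↔ ∃ y, c = D.simConf d x s b y := by
  constructor
  · intro h
    induction h with
    | refl => exact ⟨x, rfl⟩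
    | tail _ hstep ih =>
      obtain ⟨y, rfl⟩ := ih
      rcases (silent_simConf_iff hD).1 hstep with ⟨-, h⟩ | ⟨z, -, -, h⟩
      · exact ⟨y + 1, h⟩
      · exact ⟨z, h⟩
  · rintro ⟨y, rfl⟩
    induction y using nat_induction_from x with
    | self => exact .refl
    | succ y h ih => exact ih.tail ((silent_simConf_iff hD).2 (Or.inl ⟨h, rfl⟩))
    | pred y h ih => exact ih.tail ((silent_simConf_iff hD).2 (Or.inr ⟨y, rfl, h, rfl⟩))

theorem accepts_simConf_iff (hD : PeriodicFrom t d fun x => (D.step x, D.accept x)) (x : ℕ)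
    (s : S) (w : List (α × ℕ)) :
    (D.toOCA t d).Accepts (D.simConf d x s (s ∈ D.accept x) x) w ↔ D.AcceptsFrom (s, x) w := by
  induction w generalizing x s with
  | nil =>
    rw [OCA.accepts_nil_iff, acceptsFrom_nil]
    constructor
    · rintro ⟨c, hfin, hreach⟩
      obtain ⟨y, rfl⟩ := (reach_simConf_iff hD).1 hreach
      exact hfin.2
    · intro h
      exact ⟨_, by rw [simConf_self]; exact ⟨rfl, h⟩, .refl⟩
  | cons l w ih =>
    obtain ⟨a, y⟩ := l
    rw [OCA.accepts_cons_iff, acceptsFrom_cons, ← ih]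
    constructor
    · rintro ⟨p, q, hreach, hΔ, hw⟩
      obtain ⟨z, hz⟩ := (reach_simConf_iff hD).1 hreach
      obtain ⟨rfl, rfl⟩ := Prod.mk.inj hz
      obtain ⟨-, rfl⟩ := (mem_toOCA_Δ_iff hD).1 hΔ
      rwa [simConf_self]
    · intro hw
      rw [simConf_self] at hw
      exact ⟨_, _, (reach_simConf_iff hD).2 ⟨y, rfl⟩, (mem_toOCA_Δ_iff hD).2 ⟨trivial, rfl⟩, hw⟩

theorem Lobs_toOCA (hD : PeriodicFrom t d fun x => (D.step x, D.accept x)) :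
    (D.toOCA t d).Lobs = D.language := by
  ext w
  rw [OCA.mem_Lobs_iff]
  refine Iff.trans ?_ (accepts_simConf_iff hD 0 D.start w)
  simp [simConf_self, toOCA]

end CounterDFA

/-! ### Closure properties -/

theorem mem_obsClass_iff {α : Type} {L : Set (List (α × ℕ))} :
    L ∈ ObsClass α ↔
      ∃ (S : Type) (_ : Finite S) (D : CounterDFA S α), D.IsPeriodic ∧ D.language = L := by
  constructor
  · rintro ⟨Q, _, A, rfl⟩
    exact ⟨Set Q, inferInstance, A.determinize, A.isPeriodic_determinize, A.language_determinize⟩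
  · rintro ⟨S, _, D, ⟨t, d, hd, hD⟩, rfl⟩
    have : NeZero d := ⟨hd.ne'⟩
    exact ⟨CounterDFA.SimState S d, Fintype.ofFinite _, D.toOCA t d, CounterDFA.Lobs_toOCA hD⟩

theorem compl_mem_obsClass {α : Type} {L : Set (List (α × ℕ))} (h : L ∈ ObsClass α) :
    Lᶜ ∈ ObsClass α := by
  rw [mem_obsClass_iff] at h ⊢
  obtain ⟨S, hS, D, hD, rfl⟩ := h
  exact ⟨S, hS, D.compl, hD.compl, D.language_compl⟩

theorem inter_mem_obsClass {α : Type} {L L' : Set (List (α × ℕ))} (h : L ∈ ObsClass α)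
    (h' : L' ∈ ObsClass α) : L ∩ L' ∈ ObsClass α := by
  rw [mem_obsClass_iff] at h h' ⊢
  obtain ⟨S, _, D, hD, rfl⟩ := h
  obtain ⟨S', _, D', hD', rfl⟩ := h'
  exact ⟨S × S', inferInstance, D.prod D', hD.prod hD', D.language_prod D'⟩

theorem stmt16_general {α : Type} :
    (∀ L ∈ ObsClass α, Set.univ \ L ∈ ObsClass α) ∧
    (∀ L1 ∈ ObsClass α, ∀ L2 ∈ ObsClass α, L1 ∩ L2 ∈ ObsClass α) ∧
    (∀ L1 ∈ ObsClass α, ∀ L2 ∈ ObsClass α, L1 ∪ L2 ∈ ObsClass α) := by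
  refine ⟨fun L h => ?_, fun L1 h1 L2 h2 => inter_mem_obsClass h1 h2, fun L1 h1 L2 h2 => ?_⟩
  · rw [← Set.compl_eq_univ_sdiff]
    exact compl_mem_obsClass h
  · rw [Set.union_eq_compl_compl_inter_compl]
    exact compl_mem_obsClass
      (inter_mem_obsClass (compl_mem_obsClass h1) (compl_mem_obsClass h2))

/-- the class of observability languages of OCAs is closed under
complement (relative to `(α × ℕ)*`), binary intersection and binary union. -/
theorem stmt16 {α : Type} [Fintype α] [Nonempty α] :
    (∀ L ∈ ObsClass α, Set.univ \ L ∈ ObsClass α) ∧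
    (∀ L1 ∈ ObsClass α, ∀ L2 ∈ ObsClass α, L1 ∩ L2 ∈ ObsClass α) ∧
    (∀ L1 ∈ ObsClass α, ∀ L2 ∈ ObsClass α, L1 ∪ L2 ∈ ObsClass α) :=
  stmt16_general
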